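/- Let (t, n, b) be a smooth right-handed orthonormal frame on an open set U ⊆ ℝ³ with Ω_b = b·(curl b) = 0 identically on U, let H be a smooth scalar function and v a smooth nowhere-zero vector field on U with v = b × ∇H and t = v/‖v‖. Then at every point of U: ∂_s ln‖v‖ = −b·(curl n). -/

import Mathlib

/-!
Crossing `‖v‖ t = b × ∇H` with `b` gives `∇H = h b - ‖v‖ n`, where `h = b · ∇H`. The left side is
curl-free, so the `b`-component of the curl of the right side vanishes. The term
`b · (∇h × b)` drops out and `b · (∇‖v‖ × n) = (n × b) · ∇‖v‖ = t · ∇‖v‖`, which leaves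
`h (b · curl b) - ‖v‖ (b · curl n) - t · ∇‖v‖ = 0`; divide by `‖v‖`.
-/

noncomputable section

/-- Three-dimensional Euclidean space. -/
abbrev E3 : Type := EuclideanSpace ℝ (Fin 3)

/-- The Euclidean dot product on ℝ³. -/
def dot (u v : E3) : ℝ := ∑ i, u i * v i

/-- The cross product on ℝ³. -/
def cross (u v : E3) : E3 :=
  (WithLp.equiv 2 (Fin 3 → ℝ)).symm
    ![u 1 * v 2 - u 2 * v 1, u 2 * v 0 - u 0 * v 2, u 0 * v 1 - u 1 * v 0]

/-- Partial derivative of a scalar function in the `i`-th coordinate direction. -/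
def pd (i : Fin 3) (f : E3 → ℝ) (x : E3) : ℝ :=
  fderiv ℝ f x (EuclideanSpace.single i 1)

/-- The gradient ∇f of a scalar function. -/
def grad (f : E3 → ℝ) (x : E3) : E3 :=
  (WithLp.equiv 2 (Fin 3 → ℝ)).symm ![pd 0 f x, pd 1 f x, pd 2 f x]

/-- The curl ∇×F of a vector field. -/
def curl (F : E3 → E3) (x : E3) : E3 :=
  (WithLp.equiv 2 (Fin 3 → ℝ)).symm
    ![pd 1 (fun y => F y 2) x - pd 2 (fun y => F y 1) x,
      pd 2 (fun y => F y 0) x - pd 0 (fun y => F y 2) x,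
      pd 0 (fun y => F y 1) x - pd 1 (fun y => F y 0) x]

/-- Directional derivative ∂ₛ f = t·∇f of a scalar function along a vector field t. -/
def ds (t : E3 → E3) (f : E3 → ℝ) (x : E3) : ℝ := dot (t x) (grad f x)

/-- Componentwise directional derivative (u·∇)w of a vector field w along u. -/
def dirDeriv (u w : E3 → E3) (x : E3) : E3 :=
  (WithLp.equiv 2 (Fin 3 → ℝ)).symm
    ![fderiv ℝ (fun y => w y 0) x (u x),
      fderiv ℝ (fun y => w y 1) x (u x),
      fderiv ℝ (fun y => w y 2) x (u x)]

/-- Helicity density w·(curl w) of a vector field. -/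
def hel (w : E3 → E3) (x : E3) : ℝ := dot (w x) (curl w x)

/-- Cross-helicity sum n·(curl b) + b·(curl n). -/
def crossHel (n b : E3 → E3) (x : E3) : ℝ :=
  dot (n x) (curl b x) + dot (b x) (curl n x)

/-- A smooth right-handed orthonormal (Serret–Frenet type) frame on U. -/
def IsFrameOn (t n b : E3 → E3) (U : Set E3) : Prop :=
  ContDiffOn ℝ (⊤ : ℕ∞) t U ∧ ContDiffOn ℝ (⊤ : ℕ∞) n U ∧ ContDiffOn ℝ (⊤ : ℕ∞) b U ∧
  ∀ x ∈ U, ‖t x‖ = 1 ∧ ‖n x‖ = 1 ∧ ‖b x‖ = 1 ∧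
    dot (t x) (n x) = 0 ∧ dot (t x) (b x) = 0 ∧ dot (n x) (b x) = 0 ∧
    b x = cross (t x) (n x)

open scoped Topology

section Algebra

lemma dot_eq_inner (u v : E3) : dot u v = inner ℝ u v := by
  simp [dot, PiLp.inner_apply, mul_comm]

lemma dot_self_eq_norm_sq (u : E3) : dot u u = ‖u‖ ^ 2 := by
  rw [dot_eq_inner, real_inner_self_eq_norm_sq]

lemma dot_comm (u v : E3) : dot u v = dot v u :=
  dotProduct_comm u.ofLp v.ofLp

lemma zero_dot (u : E3) : dot 0 u = 0 :=
  zero_dotProduct u.ofLp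

lemma dot_zero (u : E3) : dot u 0 = 0 :=
  dotProduct_zero u.ofLp

lemma dot_add_right (u v w : E3) : dot u (v + w) = dot u v + dot u w :=
  dotProduct_add u.ofLp v.ofLp w.ofLp

lemma dot_sub_right (u v w : E3) : dot u (v - w) = dot u v - dot u w :=
  dotProduct_sub u.ofLp v.ofLp w.ofLp

lemma dot_smul_right (c : ℝ) (u v : E3) : dot u (c • v) = c * dot u v :=
  dotProduct_smul c u.ofLp v.ofLp

lemma cross_smul_right (c : ℝ) (u v : E3) : cross u (c • v) = c • cross u v :=
  congrArg (WithLp.toLp 2) (map_smul (crossProduct u.ofLp) c v.ofLp)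

lemma cross_self_eq_zero (u : E3) : cross u u = 0 :=
  congrArg (WithLp.toLp 2) (cross_self u.ofLp)

lemma cross_cross_left (u v w : E3) : cross (cross u v) w = dot u w • v - dot v w • u :=
  congrArg (WithLp.toLp 2) (cross_cross_eq_smul_sub_smul u.ofLp v.ofLp w.ofLp)

lemma cross_cross_right (u v w : E3) : cross u (cross v w) = dot u w • v - dot v u • w :=
  congrArg (WithLp.toLp 2) (cross_cross_eq_smul_sub_smul' u.ofLp v.ofLp w.ofLp)

lemma dot_cross_perm (u v w : E3) : dot u (cross v w) = dot (cross w u) v :=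
  (triple_product_permutation u.ofLp v.ofLp w.ofLp).trans
    (dotProduct_comm v.ofLp (crossProduct w.ofLp u.ofLp))

lemma dot_cross_cross (u v w z : E3) :
    dot (cross u v) (cross w z) = dot u w * dot v z - dot u z * dot v w :=
  cross_dot_cross u.ofLp v.ofLp w.ofLp z.ofLp

/-- A right-handed orthonormal triple of vectors of ℝ³, the pointwise form of `IsFrameOn`. Unit
length of `b` and its orthogonality to `t` and `n` are encoded in `b = t × n`. -/
structure IsRightHandedOrthonormal (t n b : E3) : Prop where
  norm_fst : ‖t‖ = 1
  norm_snd : ‖n‖ = 1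
  dot_fst_snd : dot t n = 0
  eq_cross : b = cross t n

namespace IsRightHandedOrthonormal

variable {t n b : E3}

lemma dot_thd_self (h : IsRightHandedOrthonormal t n b) : dot b b = 1 := by
  rw [h.eq_cross, dot_cross_cross, dot_self_eq_norm_sq, dot_self_eq_norm_sq, h.norm_fst,
    h.norm_snd, h.dot_fst_snd]
  norm_num

lemma cross_snd_thd (h : IsRightHandedOrthonormal t n b) : cross n b = t := by
  rw [h.eq_cross, cross_cross_right, dot_self_eq_norm_sq, h.norm_snd, h.dot_fst_snd]
  simp

lemma cross_thd_fst (h : IsRightHandedOrthonormal t n b) : cross b t = n := by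
  rw [h.eq_cross, cross_cross_left, dot_self_eq_norm_sq, h.norm_fst, dot_comm n, h.dot_fst_snd]
  simp

lemma eq_smul_sub_smul_of_smul_eq_cross (h : IsRightHandedOrthonormal t n b) {s : ℝ} {g : E3}
    (hg : s • t = cross b g) : g = dot b g • b - s • n := by
  have hbbg : s • n = dot b g • b - g := by
    calc s • n = cross b (s • t) := by rw [cross_smul_right, h.cross_thd_fst]
      _ = cross b (cross b g) := by rw [hg]
      _ = dot b g • b - g := by rw [cross_cross_right, h.dot_thd_self, one_smul]
  rw [hbbg, sub_sub_cancel]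

end IsRightHandedOrthonormal

lemma IsFrameOn.isRightHandedOrthonormal {t n b : E3 → E3} {U : Set E3}
    (h : IsFrameOn t n b U) {x : E3} (hx : x ∈ U) :
    IsRightHandedOrthonormal (t x) (n x) (b x) :=
  have ⟨ht, hn, _, htn, _, _, hb⟩ := h.2.2.2 x hx
  ⟨ht, hn, htn, hb⟩

end Algebra

section Calculus

lemma differentiableAt_fderiv {𝕜 V W : Type*} [NontriviallyNormedField 𝕜]
    [NormedAddCommGroup V] [NormedSpace 𝕜 V] [NormedAddCommGroup W] [NormedSpace 𝕜 W]
    {f : V → W} {x : V} (hf : ContDiffAt 𝕜 2 f x) : DifferentiableAt 𝕜 (fderiv 𝕜 f) x :=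
  (hf.fderiv_right (m := 1) (by norm_num)).differentiableAt one_ne_zero

variable {f g : E3 → ℝ} {F G : E3 → E3} {x : E3}

lemma pd_sub (i : Fin 3) (hf : DifferentiableAt ℝ f x) (hg : DifferentiableAt ℝ g x) :
    pd i (fun y => f y - g y) x = pd i f x - pd i g x := by
  simp only [pd, fderiv_fun_sub hf hg, sub_apply]

lemma pd_mul (i : Fin 3) (hf : DifferentiableAt ℝ f x) (hg : DifferentiableAt ℝ g x) :
    pd i (fun y => f y * g y) x = f x * pd i g x + g x * pd i f x := by
  simp [pd, fderiv_fun_mul hf hg]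

lemma grad_apply (f : E3 → ℝ) (x : E3) (i : Fin 3) : grad f x i = pd i f x := by
  fin_cases i <;> rfl

lemma grad_log (hf : DifferentiableAt ℝ f x) (hx : f x ≠ 0) :
    grad (fun y => Real.log (f y)) x = (f x)⁻¹ • grad f x := by
  ext i
  simp [grad_apply, pd, fderiv.log hf hx]

lemma differentiableAt_dot (hF : DifferentiableAt ℝ F x) (hG : DifferentiableAt ℝ G x) :
    DifferentiableAt ℝ (fun y => dot (F y) (G y)) x := by
  simpa only [dot_eq_inner] using hF.inner ℝ hG

lemma differentiableAt_cross (hF : DifferentiableAt ℝ F x) (hG : DifferentiableAt ℝ G x) :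
    DifferentiableAt ℝ (fun y => cross (F y) (G y)) x := by
  rw [differentiableAt_euclidean] at hF hG ⊢
  intro i
  fin_cases i <;> exact ((hF _).mul (hG _)).sub ((hF _).mul (hG _))

lemma differentiableAt_grad (hf : ContDiffAt ℝ 2 f x) : DifferentiableAt ℝ (grad f) x := by
  refine differentiableAt_euclidean.2 fun i => ?_
  simp only [grad_apply]
  exact (differentiableAt_fderiv hf).clm_apply (differentiableAt_const _)

lemma pd_pd_eq_fderiv_fderiv (hf : ContDiffAt ℝ 2 f x) (i j : Fin 3) :
    pd i (pd j f) x =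
      fderiv ℝ (fderiv ℝ f) x (EuclideanSpace.single i 1) (EuclideanSpace.single j 1) := by
  change fderiv ℝ (fun y => fderiv ℝ f y (EuclideanSpace.single j 1)) x _ = _
  simp [fderiv_clm_apply (differentiableAt_fderiv hf) (differentiableAt_const _)]

lemma pd_pd_comm (hf : ContDiffAt ℝ 2 f x) (i j : Fin 3) :
    pd i (pd j f) x = pd j (pd i f) x := by
  rw [pd_pd_eq_fderiv_fderiv hf, pd_pd_eq_fderiv_fderiv hf]
  exact (hf.isSymmSndFDerivAt (by simp)).eq _ _

lemma curl_grad (hf : ContDiffAt ℝ 2 f x) : curl (grad f) x = 0 := by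
  ext i
  fin_cases i <;> exact sub_eq_zero.2 (pd_pd_comm hf _ _)

lemma curl_congr (h : F =ᶠ[𝓝 x] G) : curl F x = curl G x := by
  have hpd (i j : Fin 3) : pd i (fun y => F y j) x = pd i (fun y => G y j) x := by
    have hj : (fun y => F y j) =ᶠ[𝓝 x] fun y => G y j := h.fun_comp fun w => w j
    rw [pd, pd, hj.fderiv_eq]
  simp only [curl, hpd]

lemma curl_sub (hF : DifferentiableAt ℝ F x) (hG : DifferentiableAt ℝ G x) :
    curl (fun y => F y - G y) x = curl F x - curl G x := by
  rw [differentiableAt_euclidean] at hF hG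
  have hpd (i j : Fin 3) : pd i (fun y => (F y - G y) j) x =
      pd i (fun y => F y j) x - pd i (fun y => G y j) x := pd_sub i (hF j) (hG j)
  simp only [curl, hpd]
  ext i
  fin_cases i <;> exact sub_sub_sub_comm _ _ _ _

lemma curl_smul (hf : DifferentiableAt ℝ f x) (hF : DifferentiableAt ℝ F x) :
    curl (fun y => f y • F y) x = f x • curl F x + cross (grad f x) (F x) := by
  rw [differentiableAt_euclidean] at hF
  have hpd (i j : Fin 3) : pd i (fun y => (f y • F y) j) x =
      f x * pd i (fun y => F y j) x + F x j * pd i f x := pd_mul i hf (hF j)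
  simp only [curl, cross, grad_apply, hpd]
  ext i
  fin_cases i <;> dsimp <;> ring

lemma dot_curl_smul (u : E3) (hf : DifferentiableAt ℝ f x) (hF : DifferentiableAt ℝ F x) :
    dot u (curl (fun y => f y • F y) x) =
      f x * dot u (curl F x) + dot (cross (F x) u) (grad f x) := by
  rw [curl_smul hf hF, dot_add_right, dot_smul_right, dot_cross_perm]

lemma dot_self_curl_smul (hf : DifferentiableAt ℝ f x) (hF : DifferentiableAt ℝ F x) :
    dot (F x) (curl (fun y => f y • F y) x) = f x * hel F x := by
  rw [dot_curl_smul _ hf hF, cross_self_eq_zero, zero_dot, add_zero, hel]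

lemma dot_cross_grad_of_grad_eq_smul_sub_smul {H h s : E3 → ℝ} {n b : E3 → E3}
    (hH : ContDiffAt ℝ 2 H x) (hh : DifferentiableAt ℝ h x) (hs : DifferentiableAt ℝ s x)
    (hn : DifferentiableAt ℝ n x) (hb : DifferentiableAt ℝ b x)
    (hgrad : grad H =ᶠ[𝓝 x] fun y => h y • b y - s y • n y) :
    dot (cross (n x) (b x)) (grad s x) = h x * hel b x - s x * dot (b x) (curl n x) := by
  have hcurl : dot (b x) (curl (fun y => h y • b y - s y • n y) x) = 0 := by
    rw [← curl_congr hgrad, curl_grad hH, dot_zero]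
  rw [curl_sub (hh.fun_smul hb) (hs.fun_smul hn), dot_sub_right, dot_self_curl_smul hh hb,
    dot_curl_smul _ hs hn] at hcurl
  linarith

end Calculus

theorem binormal_hamiltonian_log_norm_general {U : Set E3} (hU : IsOpen U) {t n b : E3 → E3}
    (hn : DifferentiableOn ℝ n U) (hb : DifferentiableOn ℝ b U)
    (hframe : ∀ x ∈ U, IsRightHandedOrthonormal (t x) (n x) (b x))
    {H : E3 → ℝ} (hH : ContDiffOn ℝ 2 H U) {v : E3 → E3}
    (hham : ∀ x ∈ U, v x = cross (b x) (grad H x)) (ht : ∀ x ∈ U, t x = ‖v x‖⁻¹ • v x) :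
    ∀ x ∈ U, ds t (fun y => Real.log ‖v y‖) x =
      dot (b x) (grad H x) / ‖v x‖ * hel b x - dot (b x) (curl n x) := by
  intro x hx
  have hv0 : ∀ y ∈ U, v y ≠ 0 := fun y hy hvy => by
    simpa [ht y hy, hvy] using (hframe y hy).norm_fst
  have hUx : U ∈ 𝓝 x := hU.mem_nhds hx
  have hHx : ContDiffAt ℝ 2 H x := hH.contDiffAt hUx
  have hnx : DifferentiableAt ℝ n x := hn.differentiableAt hUx
  have hbx : DifferentiableAt ℝ b x := hb.differentiableAt hUx
  have hgx : DifferentiableAt ℝ (grad H) x := differentiableAt_grad hHx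
  have hvx : DifferentiableAt ℝ v x :=
    (differentiableAt_cross hbx hgx).congr_of_eventuallyEq (Filter.eventually_of_mem hUx hham)
  have hsx : DifferentiableAt ℝ (fun y => ‖v y‖) x := hvx.norm ℝ (hv0 x hx)
  have hgrad : grad H =ᶠ[𝓝 x] fun y => dot (b y) (grad H y) • b y - ‖v y‖ • n y := by
    filter_upwards [hUx] with y hy
    apply (hframe y hy).eq_smul_sub_smul_of_smul_eq_cross
    rw [ht y hy, smul_inv_smul₀ (norm_ne_zero_iff.2 (hv0 y hy)), hham y hy]
  have hs0 : ‖v x‖ ≠ 0 := norm_ne_zero_iff.2 (hv0 x hx)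
  rw [ds, grad_log hsx hs0, dot_smul_right, ← (hframe x hx).cross_snd_thd,
    dot_cross_grad_of_grad_eq_smul_sub_smul hHx (differentiableAt_dot hbx hgx) hsx hnx hbx hgrad]
  field_simp

/-- if Ωᵦ = 0 and v = b × ∇H with t = v/‖v‖, then
∂ₛ ln‖v‖ = −b·(curl n). -/
theorem binormal_hamiltonian_log_norm
    (U : Set E3) (hU : IsOpen U) (t n b : E3 → E3)
    (hframe : IsFrameOn t n b U)
    (hΩb : ∀ x ∈ U, hel b x = 0)
    (H : E3 → ℝ) (hH : ContDiffOn ℝ (⊤ : ℕ∞) H U)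
    (v : E3 → E3) (hv : ContDiffOn ℝ (⊤ : ℕ∞) v U) (hv0 : ∀ x ∈ U, v x ≠ 0)
    (hham : ∀ x ∈ U, v x = cross (b x) (grad H x))
    (ht : ∀ x ∈ U, t x = ‖v x‖⁻¹ • v x) :
    ∀ x ∈ U, ds t (fun y => Real.log ‖v y‖) x = - dot (b x) (curl n x) := by
  intro x hx
  rw [binormal_hamiltonian_log_norm_general hU (hframe.2.1.differentiableOn (by simp))
    (hframe.2.2.1.differentiableOn (by simp)) (fun _ => hframe.isRightHandedOrthonormal)
    (hH.of_le ENat.LEInfty.out) hham ht x hx, hΩb x hx, mul_zero, zero_sub]
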